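/- Let f ∈ A₁(c). Then f′(x) > 0 for every x ∈ (−1,1), and f satisfies the differential inequality f‴(x) ≥ 3·f″(x)²/(2·f′(x)) for every x ∈ (−1,1); equivalently, the Schwarzian derivative f‴/f′ − (3/2)(f″/f′)² of f is nonnegative on (−1,1). -/

import Mathlib

open Set Complex

noncomputable section

/-- The doubly-slit plane `ℂ(J)` for `J ⊆ ℝ`. -/
def CSlit (J : Set ℝ) : Set ℂ := {z : ℂ | z.im ≠ 0 ∨ z.re ∈ J}

/-- `ℂ₁ = ℂ((−1,1))`. -/
def C1 : Set ℂ := CSlit (Set.Ioo (-1 : ℝ) 1)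

/-- The class `A₁(c)` of normalized Herglotz functions. -/
structure MemA1 (c₁ c₂ c₃ c₄ : ℝ) (f : ℂ → ℂ) : Prop where
  holo : DifferentiableOn ℂ f C1
  maps : Set.MapsTo f C1 C1
  symm : ∀ z ∈ C1, f (starRingEnd ℂ z) = starRingEnd ℂ (f z)
  upper : ∀ z ∈ C1, 0 < z.im → 0 ≤ (f z).im
  lower : ∀ z ∈ C1, z.im < 0 → (f z).im ≤ 0
  val1 : f (c₁ : ℂ) = (c₃ : ℂ)
  val2 : f (c₂ : ℂ) = (c₄ : ℂ)

/-!
A holomorphic map of the upper half-plane into its closure contracts the hyperbolic metric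
(Schwarz–Pick). Letting the two points of that estimate descend vertically to real points `x`, `y`,
across which `f` continues analytically with real values, gives Löwner's inequality
`(f y - f x)² ≤ (y - x)² f'(x) f'(y)`. If `f'` vanished at one such point, `f` would therefore
take the same value at all of them. Both sides of Löwner's inequality have the same Taylor expansion
at `x` up to order three, and the comparison of the coefficients of `(y - x)⁴` is
`f''(x)² / 4 ≤ f'(x) f'''(x) / 6`.
-/

open Filter Topology Metric
open UpperHalfPlane (upperHalfPlaneSet)
open scoped ComplexConjugate Nat

section CayleyTransform

/-- The Cayley transform centred at `w`, which maps the upper half-plane onto the unit disc and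
`w` to `0` when `0 < w.im`. -/
def cayley (w z : ℂ) : ℂ := (z - w) / (z - conj w)

/-- The inverse of `cayley w`, as a map from the unit disc to the upper half-plane. -/
def cayleyInv (w ζ : ℂ) : ℂ := (w - conj w * ζ) / (1 - ζ)

variable {w z ζ : ℂ}

lemma normSq_sub_conj (z w : ℂ) : normSq (z - conj w) = normSq (z - w) + 4 * (z.im * w.im) := by
  simp only [normSq_apply, sub_re, sub_im, conj_re, conj_im]
  ring

lemma sub_conj_ne_zero (hz : 0 < z.im) (hw : 0 < w.im) : z - conj w ≠ 0 := fun h => by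
  have him : z.im + w.im = 0 := by simpa using congrArg Complex.im h
  linarith

lemma norm_cayley_lt_one (hw : 0 < w.im) (hz : 0 < z.im) : ‖cayley w z‖ < 1 := by
  rw [cayley, norm_div, div_lt_one (norm_pos_iff.2 (sub_conj_ne_zero hz hw)),
    ← sq_lt_sq₀ (norm_nonneg _) (norm_nonneg _), ← normSq_eq_norm_sq, ← normSq_eq_norm_sq,
    normSq_sub_conj]
  linarith [mul_pos hz hw]

lemma one_sub_ne_zero_of_norm_lt_one (hζ : ‖ζ‖ < 1) : 1 - ζ ≠ 0 :=
  sub_ne_zero.2 fun h => by simp [← h] at hζ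

lemma im_cayleyInv (w ζ : ℂ) :
    (cayleyInv w ζ).im = w.im * (1 - normSq ζ) / normSq (1 - ζ) := by
  simp only [cayleyInv, div_im, ← sub_div]
  simp only [normSq_apply, sub_re, sub_im, mul_re, mul_im, conj_re, conj_im, one_re, one_im]
  ring

lemma im_cayleyInv_pos (hw : 0 < w.im) (hζ : ‖ζ‖ < 1) : 0 < (cayleyInv w ζ).im := by
  have hden : 0 < normSq (1 - ζ) := normSq_pos.2 (one_sub_ne_zero_of_norm_lt_one hζ)
  have hnum : 0 < 1 - normSq ζ := by
    rw [normSq_eq_norm_sq, sub_pos]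
    exact pow_lt_one₀ (norm_nonneg ζ) hζ two_ne_zero
  rw [im_cayleyInv]
  positivity

lemma cayleyInv_cayley (hw : 0 < w.im) (hz : 0 < z.im) : cayleyInv w (cayley w z) = z := by
  have hzw := sub_conj_ne_zero hz hw
  rw [cayleyInv, div_eq_iff (one_sub_ne_zero_of_norm_lt_one (norm_cayley_lt_one hw hz)), cayley]
  field_simp
  ring

lemma cayleyInv_zero (w : ℂ) : cayleyInv w 0 = w := by simp [cayleyInv]

lemma differentiableOn_cayley (hw : 0 < w.im) :
    DifferentiableOn ℂ (cayley w) upperHalfPlaneSet :=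
  (differentiableOn_id.sub_const _).div (differentiableOn_id.sub_const _)
    fun _ hz => sub_conj_ne_zero hz hw

lemma differentiableOn_cayleyInv (w : ℂ) : DifferentiableOn ℂ (cayleyInv w) (ball 0 1) :=
  DifferentiableOn.div (by fun_prop) (by fun_prop)
    fun _ hζ => one_sub_ne_zero_of_norm_lt_one (mem_ball_zero_iff.1 hζ)

end CayleyTransform

section SchwarzPick

variable {F : ℂ → ℂ} {z w : ℂ}

lemma norm_cayley_le_norm_cayley (hF : DifferentiableOn ℂ F upperHalfPlaneSet)
    (hmaps : MapsTo F upperHalfPlaneSet upperHalfPlaneSet) (hz : 0 < z.im) (hw : 0 < w.im) :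
    ‖cayley (F w) (F z)‖ ≤ ‖cayley w z‖ := by
  let g : ℂ → ℂ := cayley (F w) ∘ F ∘ cayleyInv w
  have hinv : MapsTo (cayleyInv w) (ball 0 1) upperHalfPlaneSet :=
    fun ζ hζ => im_cayleyInv_pos hw (mem_ball_zero_iff.1 hζ)
  have hg : DifferentiableOn ℂ g (ball 0 1) :=
    (differentiableOn_cayley (hmaps hw)).comp (hF.comp (differentiableOn_cayleyInv w) hinv)
      (hmaps.comp hinv)
  have hgmaps : MapsTo g (ball 0 1) (closedBall 0 1) := fun ζ hζ =>
    mem_closedBall_zero_iff.2 (norm_cayley_lt_one (hmaps hw) (hmaps (hinv hζ))).le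
  have hg0 : g 0 = 0 := by simp [g, cayleyInv_zero, cayley]
  simpa [g, cayleyInv_cayley hw hz] using
    norm_le_norm_of_mapsTo_ball hg hgmaps hg0 (norm_cayley_lt_one hw hz)

lemma normSq_sub_mul_le_of_mapsTo (hF : DifferentiableOn ℂ F upperHalfPlaneSet)
    (hmaps : MapsTo F upperHalfPlaneSet upperHalfPlaneSet) (hz : 0 < z.im) (hw : 0 < w.im) :
    normSq (F z - F w) * (z.im * w.im) ≤ normSq (z - w) * ((F z).im * (F w).im) := by
  have hle : normSq (cayley (F w) (F z)) ≤ normSq (cayley w z) := by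
    rw [normSq_eq_norm_sq, normSq_eq_norm_sq]
    gcongr
    exact norm_cayley_le_norm_cayley hF hmaps hz hw
  rw [cayley, cayley, normSq_div, normSq_div,
    div_le_div_iff₀ (normSq_pos.2 (sub_conj_ne_zero (hmaps hz) (hmaps hw)))
      (normSq_pos.2 (sub_conj_ne_zero hz hw)), normSq_sub_conj, normSq_sub_conj] at hle
  linarith

-- Adding `ε * I` to `F` makes its imaginary part positive; then `ε → 0`.
lemma normSq_sub_mul_le_of_im_nonneg (hF : DifferentiableOn ℂ F upperHalfPlaneSet)
    (hnonneg : ∀ z ∈ upperHalfPlaneSet, 0 ≤ (F z).im) (hz : 0 < z.im) (hw : 0 < w.im) :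
    normSq (F z - F w) * (z.im * w.im) ≤ normSq (z - w) * ((F z).im * (F w).im) := by
  have hperturbed : ∀ ε > (0 : ℝ), normSq (F z - F w) * (z.im * w.im) ≤
      normSq (z - w) * (((F z).im + ε) * ((F w).im + ε)) := fun ε hε => by
    have hmaps : MapsTo (fun z => F z + ε * I) upperHalfPlaneSet upperHalfPlaneSet :=
      fun z hz => show 0 < (F z + ε * I).im by
        simpa using add_pos_of_nonneg_of_pos (hnonneg z hz) hε
    simpa using normSq_sub_mul_le_of_mapsTo (hF.add_const _) hmaps hz hw
  have hcont : Continuous fun ε : ℝ => normSq (z - w) * (((F z).im + ε) * ((F w).im + ε)) := by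
    fun_prop
  simpa using ge_of_tendsto ((hcont.tendsto 0).mono_left nhdsWithin_le_nhds)
    (eventually_nhdsWithin_of_forall (s := Ioi 0) hperturbed)

lemma normSq_vertical_sub_le (hF : DifferentiableOn ℂ F upperHalfPlaneSet)
    (hnonneg : ∀ z ∈ upperHalfPlaneSet, 0 ≤ (F z).im) (x y : ℝ) {ε : ℝ} (hε : 0 < ε) :
    normSq (F (y + ε * I) - F (x + ε * I)) ≤
      (y - x) ^ 2 * ((F (x + ε * I)).im / ε * ((F (y + ε * I)).im / ε)) := by
  have him : ∀ t : ℝ, (t + ε * I : ℂ).im = ε := by simp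
  have hsub : normSq ((y + ε * I : ℂ) - (x + ε * I)) = (y - x) ^ 2 := by
    rw [add_sub_add_right_eq_sub, ← ofReal_sub, normSq_ofReal, sq]
  have hSP := normSq_sub_mul_le_of_im_nonneg hF hnonneg
    (z := y + ε * I) (w := x + ε * I) (by rwa [him]) (by rwa [him])
  rw [hsub, him, him] at hSP
  rw [div_mul_div_comm, ← mul_div_assoc, le_div_iff₀ (by positivity)]
  linarith

end SchwarzPick

section VerticalLimit

variable {f : ℂ → ℂ} {f' : ℂ} {x : ℝ}

lemma tendsto_vertical (hf : ContinuousAt f x) :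
    Tendsto (fun ε : ℝ => f (x + ε * I)) (𝓝[>] 0) (𝓝 (f x)) := by
  have hline : Tendsto (fun ε : ℝ => (x + ε * I : ℂ)) (𝓝 0) (𝓝 x) :=
    Continuous.tendsto' (by fun_prop) _ _ (by simp)
  exact (hf.tendsto.comp hline).mono_left nhdsWithin_le_nhds

lemma tendsto_im_vertical_div (hf : HasDerivAt f f' x) (him : (f x).im = 0) :
    Tendsto (fun ε : ℝ => (f (x + ε * I)).im / ε) (𝓝[>] 0) (𝓝 f'.re) := by
  have hline : HasDerivAt (fun ε : ℝ => (x + ε * I : ℂ)) I 0 := by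
    simpa using ((ofRealCLM.hasDerivAt (x := 0)).mul_const I).const_add (x : ℂ)
  have hcomp : HasDerivAt (fun ε : ℝ => f (x + ε * I)) (f' * I) 0 :=
    HasDerivAt.comp (0 : ℝ) (h₂ := f) (by simpa using hf) hline
  have him_deriv : HasDerivAt (fun ε : ℝ => (f (x + ε * I)).im) f'.re 0 := by
    simpa [Function.comp_def] using imCLM.hasFDerivAt.comp_hasDerivAt (0 : ℝ) hcomp
  simpa [him, div_eq_inv_mul] using him_deriv.tendsto_slope_zero_right

end VerticalLimit

/-- Löwner's class `P(J)` of Pick functions: holomorphic maps of the upper half-plane into its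
closure that continue analytically across `J ⊆ ℝ` with real values on `J`. -/
structure IsPickOn (J : Set ℝ) (f : ℂ → ℂ) : Prop where
  differentiableOn : DifferentiableOn ℂ f upperHalfPlaneSet
  im_nonneg : ∀ z ∈ upperHalfPlaneSet, 0 ≤ (f z).im
  analyticAt : ∀ x ∈ J, AnalyticAt ℂ f (x : ℂ)
  im_eq_zero : ∀ x ∈ J, (f x).im = 0

namespace IsPickOn

variable {J : Set ℝ} {f : ℂ → ℂ} {x y : ℝ}

lemma tendsto_im_vertical_div (hf : IsPickOn J f) (hx : x ∈ J) :
    Tendsto (fun ε : ℝ => (f (x + ε * I)).im / ε) (𝓝[>] 0) (𝓝 (deriv f x).re) :=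
  _root_.tendsto_im_vertical_div (hf.analyticAt x hx).differentiableAt.hasDerivAt
    (hf.im_eq_zero x hx)

lemma deriv_re_nonneg (hf : IsPickOn J f) (hx : x ∈ J) : 0 ≤ (deriv f x).re := by
  refine ge_of_tendsto (hf.tendsto_im_vertical_div hx)
    (eventually_nhdsWithin_of_forall fun ε (hε : 0 < ε) => ?_)
  exact div_nonneg (hf.im_nonneg _ (show 0 < (x + ε * I : ℂ).im by simpa using hε)) hε.le

theorem normSq_sub_le (hf : IsPickOn J f) (hx : x ∈ J) (hy : y ∈ J) :
    normSq (f y - f x) ≤ (y - x) ^ 2 * ((deriv f x).re * (deriv f y).re) := by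
  have hleft : Tendsto (fun ε : ℝ => normSq (f (y + ε * I) - f (x + ε * I))) (𝓝[>] 0)
      (𝓝 (normSq (f y - f x))) :=
    (continuous_normSq.tendsto _).comp
      ((tendsto_vertical (hf.analyticAt y hy).continuousAt).sub
        (tendsto_vertical (hf.analyticAt x hx).continuousAt))
  have hright := ((hf.tendsto_im_vertical_div hx).mul (hf.tendsto_im_vertical_div hy)).const_mul
    ((y - x) ^ 2)
  exact le_of_tendsto_of_tendsto hleft hright
    (eventually_nhdsWithin_of_forall fun _ hε =>
      normSq_vertical_sub_le hf.differentiableOn hf.im_nonneg x y hε)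

lemma deriv_re_pos (hf : IsPickOn J f) (hx : x ∈ J) (hy : y ∈ J) (hne : f y ≠ f x) :
    0 < (deriv f x).re := by
  refine (hf.deriv_re_nonneg hx).lt_of_ne' fun hzero => ?_
  have hle := hf.normSq_sub_le hx hy
  rw [hzero, zero_mul, mul_zero] at hle
  exact hle.not_gt (normSq_pos.2 (sub_ne_zero.2 hne))

end IsPickOn

section Schwarzian

variable {g : ℝ → ℝ} {x : ℝ}

/-- The Schwarzian derivative of a real function; it is meaningful only where `deriv g x ≠ 0`. -/
def schwarzian (g : ℝ → ℝ) (x : ℝ) : ℝ :=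
  deriv (deriv (deriv g)) x / deriv g x - 3 / 2 * (deriv (deriv g) x / deriv g x) ^ 2

lemma schwarzian_nonneg_iff (hpos : 0 < deriv g x) :
    0 ≤ schwarzian g x ↔
      3 * deriv (deriv g) x ^ 2 / (2 * deriv g x) ≤ deriv (deriv (deriv g)) x := by
  have hfactor : schwarzian g x = (deriv (deriv (deriv g)) x -
      3 * deriv (deriv g) x ^ 2 / (2 * deriv g x)) / deriv g x := by
    rw [schwarzian]
    field_simp
  rw [hfactor, le_div_iff₀ hpos, zero_mul, sub_nonneg]

lemma tendsto_sub_taylor_div_pow {n : ℕ} (hg : ContDiffAt ℝ n g x) :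
    Tendsto (fun y => (g y - ∑ k ∈ Finset.range n, iteratedDeriv k g x / k ! * (y - x) ^ k) /
      (y - x) ^ n) (𝓝[≠] x) (𝓝 (iteratedDeriv n g x / n !)) := by
  obtain ⟨r, hr, hball⟩ := Metric.eventually_nhds_iff_ball.1 (hg.eventually (by simp))
  have hx : x ∈ ball x r := mem_ball_self hr
  have hremainder := (Real.taylor_tendsto (convex_ball x r) hx
    fun y hy => (hball y hy).contDiffWithinAt).mono_left
      (nhdsWithin_le_of_mem (t := {x}ᶜ) (mem_nhdsWithin_of_mem_nhds (ball_mem_nhds x hr)))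
  rw [← zero_add (_ / _)]
  refine (hremainder.add_const _).congr' ?_
  filter_upwards [self_mem_nhdsWithin] with y hy
  have hne : (y - x) ^ n ≠ 0 := pow_ne_zero _ (sub_ne_zero.2 hy)
  simp only [taylor_within_apply, iteratedDerivWithin_of_isOpen isOpen_ball hx,
    Finset.sum_range_succ, smul_eq_mul, div_eq_inv_mul, mul_right_comm]
  field_simp
  ring

lemma three_mul_sq_deriv_deriv_le_of_loewner (hg : ContDiffAt ℝ 3 g x)
    (hloewner : ∀ᶠ y in 𝓝 x, (g y - g x) ^ 2 ≤ (y - x) ^ 2 * (deriv g x * deriv g y)) :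
    3 * deriv (deriv g) x ^ 2 ≤ 2 * deriv g x * deriv (deriv (deriv g)) x := by
  set p := deriv g x
  set q := deriv (deriv g) x
  set r := deriv (deriv (deriv g)) x
  let A : ℝ → ℝ := fun y => (deriv g y - (p + q * (y - x))) / (y - x) ^ 2
  let B : ℝ → ℝ := fun y => (g y - (g x + p * (y - x) + q / 2 * (y - x) ^ 2)) / (y - x) ^ 3
  have hA : Tendsto A (𝓝[≠] x) (𝓝 (r / 2)) := by
    simpa [Finset.sum_range_succ, iteratedDeriv_succ] using
      tendsto_sub_taylor_div_pow (n := 2) (hg.derivWithin (by norm_num))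
  have hB : Tendsto B (𝓝[≠] x) (𝓝 (r / 6)) := by
    simpa [Finset.sum_range_succ, iteratedDeriv_succ, Nat.factorial] using
      tendsto_sub_taylor_div_pow (n := 3) hg
  have hsub : Tendsto (fun y => y - x) (𝓝[≠] x) (𝓝 0) :=
    (Continuous.tendsto' (by fun_prop) _ _ (by simp)).mono_left nhdsWithin_le_nhds
  have hlim : Tendsto (fun y => p * A y - 2 * p * B y - (q / 2 + (y - x) * B y) ^ 2) (𝓝[≠] x)
      (𝓝 (p * (r / 2) - 2 * p * (r / 6) - (q / 2 + 0 * (r / 6)) ^ 2)) :=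
    ((hA.const_mul p).sub (hB.const_mul (2 * p))).sub (((hsub.mul hB).const_add (q / 2)).pow 2)
  have hnonneg : ∀ᶠ y in 𝓝[≠] x, 0 ≤ p * A y - 2 * p * B y - (q / 2 + (y - x) * B y) ^ 2 := by
    filter_upwards [hloewner.filter_mono nhdsWithin_le_nhds, self_mem_nhdsWithin] with y hle hy
    have hne : y - x ≠ 0 := sub_ne_zero.2 hy
    have hquot : p * A y - 2 * p * B y - (q / 2 + (y - x) * B y) ^ 2 =
        ((y - x) ^ 2 * (p * deriv g y) - (g y - g x) ^ 2) / (y - x) ^ 4 := by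
      simp only [A, B]
      field_simp
      ring
    rw [hquot]
    exact div_nonneg (sub_nonneg.2 hle) (by positivity)
  linarith [ge_of_tendsto hlim hnonneg]

end Schwarzian

section RealRestriction

variable {f : ℂ → ℂ} {J : Set ℝ} {x y : ℝ}

/-- The restriction to `ℝ` of a complex function, as a real function: the real part is taken, which
loses nothing at the points where `f` is real. -/
def realRestrict (f : ℂ → ℂ) (x : ℝ) : ℝ := (f x).re

lemma deriv_realRestrict (hf : DifferentiableAt ℂ f x) :
    deriv (realRestrict f) x = (deriv f x).re :=
  hf.hasDerivAt.real_of_complex.deriv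

namespace IsPickOn

theorem sq_realRestrict_sub_le (hf : IsPickOn J f) (hx : x ∈ J) (hy : y ∈ J) :
    (realRestrict f y - realRestrict f x) ^ 2 ≤
      (y - x) ^ 2 * (deriv (realRestrict f) x * deriv (realRestrict f) y) := by
  rw [deriv_realRestrict (hf.analyticAt x hx).differentiableAt,
    deriv_realRestrict (hf.analyticAt y hy).differentiableAt]
  calc (realRestrict f y - realRestrict f x) ^ 2 = (f y - f x).re * (f y - f x).re := by
        rw [sub_re, sq, realRestrict, realRestrict]
    _ ≤ normSq (f y - f x) := re_sq_le_normSq _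
    _ ≤ _ := hf.normSq_sub_le hx hy

theorem three_mul_sq_deriv_deriv_le (hf : IsPickOn J f) (hJ : IsOpen J) (hx : x ∈ J) :
    3 * deriv (deriv (realRestrict f)) x ^ 2 ≤
      2 * deriv (realRestrict f) x * deriv (deriv (deriv (realRestrict f))) x :=
  three_mul_sq_deriv_deriv_le_of_loewner (hf.analyticAt x hx).re_ofReal.contDiffAt
    (eventually_of_mem (hJ.mem_nhds hx) fun _ hy => hf.sq_realRestrict_sub_le hx hy)

end IsPickOn

end RealRestriction

lemma isOpen_CSlit {J : Set ℝ} (hJ : IsOpen J) : IsOpen (CSlit J) :=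
  (isOpen_ne_fun continuous_im continuous_const).union (hJ.preimage continuous_re)

lemma MemA1.isPickOn {c₁ c₂ c₃ c₄ : ℝ} {f : ℂ → ℂ} (hf : MemA1 c₁ c₂ c₃ c₄ f) :
    IsPickOn (Ioo (-1) 1) f where
  differentiableOn := hf.holo.mono fun _ hz => Or.inl hz.ne'
  im_nonneg z hz := hf.upper z (Or.inl hz.ne') hz
  analyticAt x hx := hf.holo.analyticAt ((isOpen_CSlit isOpen_Ioo).mem_nhds (Or.inr hx))
  im_eq_zero x hx := conj_eq_iff_im.1 (by simpa using (hf.symm x (Or.inr hx)).symm)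

theorem stmt10_general {J : Set ℝ} (hJ : IsOpen J) {f : ℂ → ℂ} (hf : IsPickOn J f) {a b : ℝ}
    (ha : a ∈ J) (hb : b ∈ J) (hab : f a ≠ f b) :
    (∀ x ∈ J, 0 < deriv (realRestrict f) x) ∧
    (∀ x ∈ J, 3 * deriv (deriv (realRestrict f)) x ^ 2 / (2 * deriv (realRestrict f) x) ≤
      deriv (deriv (deriv (realRestrict f))) x) ∧
    (∀ x ∈ J, 0 ≤ schwarzian (realRestrict f) x) := by
  have hpos : ∀ x ∈ J, 0 < deriv (realRestrict f) x := fun x hx => by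
    rw [deriv_realRestrict (hf.analyticAt x hx).differentiableAt]
    exact (hab.ne_or_ne (f x)).elim (hf.deriv_re_pos hx ha) (hf.deriv_re_pos hx hb)
  have hineq : ∀ x ∈ J, 3 * deriv (deriv (realRestrict f)) x ^ 2 /
      (2 * deriv (realRestrict f) x) ≤ deriv (deriv (deriv (realRestrict f))) x := fun x hx => by
    rw [div_le_iff₀' (mul_pos two_pos (hpos x hx))]
    exact hf.three_mul_sq_deriv_deriv_le hJ hx
  exact ⟨hpos, hineq, fun x hx => (schwarzian_nonneg_iff (hpos x hx)).2 (hineq x hx)⟩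

theorem stmt10 (c₁ c₂ c₃ c₄ : ℝ)
    (h1 : -1 < c₁) (h12 : c₁ < c₂) (h2 : c₂ < 1)
    (h3 : -1 < c₃) (h34 : c₃ < c₄) (h4 : c₄ < 1)
    (f : ℂ → ℂ) (hf : MemA1 c₁ c₂ c₃ c₄ f) :
    (∀ x ∈ Set.Ioo (-1 : ℝ) 1, 0 < deriv (fun y : ℝ => (f y).re) x) ∧
    (∀ x ∈ Set.Ioo (-1 : ℝ) 1,
      3 * (deriv (deriv (fun y : ℝ => (f y).re)) x) ^ 2 /
          (2 * deriv (fun y : ℝ => (f y).re) x) ≤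
        deriv (deriv (deriv (fun y : ℝ => (f y).re))) x) ∧
    (∀ x ∈ Set.Ioo (-1 : ℝ) 1,
      0 ≤ deriv (deriv (deriv (fun y : ℝ => (f y).re))) x /
            deriv (fun y : ℝ => (f y).re) x -
          (3 / 2) * (deriv (deriv (fun y : ℝ => (f y).re)) x /
            deriv (fun y : ℝ => (f y).re) x) ^ 2) :=
  stmt10_general isOpen_Ioo hf.isPickOn (a := c₁) (b := c₂) ⟨h1, h12.trans h2⟩ ⟨h1.trans h12, h2⟩
    (by rw [hf.val1, hf.val2]; exact_mod_cast h34.ne)
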